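/- Let K < 0, let x_1, …, x_n be points of ℍ^d_K, and let α_1, …, α_n ≥ 0 with ∑_{i=1}^n α_i = 1. Set v = ∑_{i=1}^n α_i x_i. Then K·⟨v,v⟩_L ≥ 1 (in particular ⟨v,v⟩_L < 0 and v_0 > 0), with equality if and only if all x_i with α_i > 0 coincide. -/

import Mathlib

/-!
Expanding bilinearly and using `∑ α i = 1`,
`K⟨v,v⟩ - 1 = ∑ i, ∑ j, α i * α j * (K⟨x i, x j⟩ - 1)`, so everything reduces to the
reversed Cauchy–Schwarz inequality `K⟨x,y⟩ ≥ 1` on the hyperboloid, with equality iff `x = y`.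
That inequality comes from the vector `y₀ x - x₀ y`, whose time coordinate vanishes: its Euclidean
square norm equals its Lorentzian one, `y₀²⟨x,x⟩ + x₀²⟨y,y⟩ - 2 x₀ y₀ ⟨x,y⟩`. Multiplying by `-K`
gives `2 x₀ y₀ (K⟨x,y⟩ - 1) = (x₀ - y₀)² - K ‖y₀ x - x₀ y‖²`.
-/

noncomputable section

/-- Lorentzian inner product on ℝ^{d+1}: ⟨x,y⟩_L = −x₀y₀ + ∑_{i=1}^d xᵢyᵢ. -/
def lorentzInner {d : ℕ} (x y : Fin (d + 1) → ℝ) : ℝ :=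
  (∑ i, x i * y i) - 2 * x 0 * y 0

/-- Membership in the Lorentz model ℍ^d_K: ⟨x,x⟩_L = 1/K and x₀ > 0. -/
def onHyperboloid {d : ℕ} (K : ℝ) (x : Fin (d + 1) → ℝ) : Prop :=
  lorentzInner x x = 1 / K ∧ 0 < x 0

/-- The spacelike vector `y₀ x - x₀ y` measures how far `K⟨x,y⟩` is from its minimum `1`. -/
lemma onHyperboloid.two_mul_sub_one {d : ℕ} {K : ℝ} (hK : K < 0) {x y : Fin (d + 1) → ℝ}
    (hx : onHyperboloid K x) (hy : onHyperboloid K y) :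
    2 * x 0 * y 0 * (K * lorentzInner x y - 1) =
      (x 0 - y 0) ^ 2 + (-K) * ∑ i, (y 0 * x i - x 0 * y i) ^ 2 := by
  have h : ∑ i, (y 0 * x i - x 0 * y i) ^ 2 =
      y 0 ^ 2 * lorentzInner x x + x 0 ^ 2 * lorentzInner y y
        - 2 * x 0 * y 0 * lorentzInner x y := by
    have h' : ∑ i, (y 0 * x i - x 0 * y i) ^ 2 =
        y 0 ^ 2 * ∑ i, x i * x i + x 0 ^ 2 * ∑ i, y i * y i
          - 2 * x 0 * y 0 * ∑ i, x i * y i := by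
      simp only [Finset.mul_sum, ← Finset.sum_add_distrib, ← Finset.sum_sub_distrib]
      exact Finset.sum_congr rfl fun i _ => by ring
    rw [h']
    simp only [lorentzInner]
    ring
  rw [h, hx.1, hy.1]
  field_simp [hK.ne]
  ring

lemma onHyperboloid.one_le {d : ℕ} {K : ℝ} (hK : K < 0) {x y : Fin (d + 1) → ℝ}
    (hx : onHyperboloid K x) (hy : onHyperboloid K y) : 1 ≤ K * lorentzInner x y := by
  have h := onHyperboloid.two_mul_sub_one hK hx hy
  have hpos : 0 < 2 * x 0 * y 0 := mul_pos (mul_pos two_pos hx.2) hy.2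
  have hS : 0 ≤ ∑ i, (y 0 * x i - x 0 * y i) ^ 2 := Finset.sum_nonneg fun i _ => sq_nonneg _
  have hr := add_nonneg (sq_nonneg (x 0 - y 0)) (mul_nonneg (neg_nonneg.2 hK.le) hS)
  rw [← h] at hr
  linarith [nonneg_of_mul_nonneg_right hr hpos]

lemma onHyperboloid.eq_one_iff {d : ℕ} {K : ℝ} (hK : K < 0) {x y : Fin (d + 1) → ℝ}
    (hx : onHyperboloid K x) (hy : onHyperboloid K y) :
    K * lorentzInner x y = 1 ↔ x = y := by
  constructor
  · intro he
    have h := onHyperboloid.two_mul_sub_one hK hx hy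
    have hS : 0 ≤ ∑ i, (y 0 * x i - x 0 * y i) ^ 2 := Finset.sum_nonneg fun i _ => sq_nonneg _
    rw [he, sub_self, mul_zero] at h
    obtain ⟨h1, h2⟩ := (add_eq_zero_iff_of_nonneg (sq_nonneg (x 0 - y 0))
      (mul_nonneg (neg_nonneg.2 hK.le) hS)).1 h.symm
    have h0 : x 0 = y 0 := sub_eq_zero.1 (pow_eq_zero_iff two_ne_zero |>.1 h1)
    have h3 := (mul_eq_zero.1 h2).resolve_left (neg_ne_zero.2 hK.ne)
    rw [Finset.sum_eq_zero_iff_of_nonneg fun i _ => sq_nonneg _] at h3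
    funext i
    have h4 := pow_eq_zero_iff two_ne_zero |>.1 (h3 i (Finset.mem_univ i))
    rw [← h0, ← mul_sub] at h4
    exact sub_eq_zero.1 ((mul_eq_zero.1 h4).resolve_left hx.2.ne')
  · rintro rfl
    rw [hx.1, mul_one_div_cancel hK.ne]

lemma lorentzInner_sum_smul {d n : ℕ} (x : Fin n → Fin (d + 1) → ℝ) (α : Fin n → ℝ) :
    lorentzInner (∑ i, α i • x i) (∑ i, α i • x i) =
      ∑ i, ∑ j, α i * α j * lorentzInner (x i) (x j) := by
  have h (k : Fin (d + 1)) : (∑ i, α i • x i) k * (∑ i, α i • x i) k =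
      ∑ i, ∑ j, α i * α j * (x i k * x j k) := by
    simp only [Finset.sum_apply, Pi.smul_apply, smul_eq_mul, Finset.sum_mul_sum]
    exact Finset.sum_congr rfl fun i _ => Finset.sum_congr rfl fun j _ => by ring
  have hsp : ∑ k, ∑ i, ∑ j, α i * α j * (x i k * x j k) =
      ∑ i, ∑ j, α i * α j * ∑ k, x i k * x j k := by
    rw [Finset.sum_comm]
    refine Finset.sum_congr rfl fun i _ => ?_
    rw [Finset.sum_comm]
    simp only [Finset.mul_sum]
  simp only [lorentzInner]
  rw [mul_assoc, h 0]
  simp only [h]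
  rw [hsp]
  simp only [Finset.mul_sum (a := (2 : ℝ)), ← Finset.sum_sub_distrib]
  exact Finset.sum_congr rfl fun i _ => Finset.sum_congr rfl fun j _ => by ring

/-- A convex combination v of hyperboloid points satisfies K·⟨v,v⟩_L ≥ 1
(in particular ⟨v,v⟩_L < 0 and v₀ > 0), with equality iff all points with
positive coefficient coincide. -/
theorem convex_combination_bound {d n : ℕ} {K : ℝ} (hK : K < 0)
    {x : Fin n → Fin (d + 1) → ℝ} (hx : ∀ i, onHyperboloid K (x i))
    {α : Fin n → ℝ} (hα : ∀ i, 0 ≤ α i) (hsum : ∑ i, α i = 1) :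
    1 ≤ K * lorentzInner (∑ i, α i • x i) (∑ i, α i • x i) ∧
    lorentzInner (∑ i, α i • x i) (∑ i, α i • x i) < 0 ∧
    0 < (∑ i, α i • x i) 0 ∧
    (K * lorentzInner (∑ i, α i • x i) (∑ i, α i • x i) = 1 ↔
      ∀ i j, 0 < α i → 0 < α j → x i = x j) := by
  have hdef : K * lorentzInner (∑ i, α i • x i) (∑ i, α i • x i) - 1 =
      ∑ i, ∑ j, α i * α j * (K * lorentzInner (x i) (x j) - 1) := by
    have hone : ∑ i, ∑ j, α i * α j = 1 := by rw [← Finset.sum_mul_sum, hsum, one_mul]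
    rw [lorentzInner_sum_smul]
    simp only [mul_sub, mul_one, Finset.sum_sub_distrib, hone, Finset.mul_sum, mul_left_comm K]
  have hterm (i j : Fin n) : 0 ≤ α i * α j * (K * lorentzInner (x i) (x j) - 1) :=
    mul_nonneg (mul_nonneg (hα i) (hα j))
      (sub_nonneg.2 (onHyperboloid.one_le hK (hx i) (hx j)))
  have hrow (i : Fin n) : 0 ≤ ∑ j, α i * α j * (K * lorentzInner (x i) (x j) - 1) :=
    Finset.sum_nonneg fun j _ => hterm i j
  have hbound : 1 ≤ K * lorentzInner (∑ i, α i • x i) (∑ i, α i • x i) := by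
    rw [← sub_nonneg, hdef]
    exact Finset.sum_nonneg fun i _ => hrow i
  refine ⟨hbound, ?_, ?_, ?_⟩
  · by_contra! hL
    linarith [mul_nonpos_of_nonpos_of_nonneg hK.le hL]
  · obtain ⟨i, -, hi⟩ : ∃ i ∈ Finset.univ, 0 < α i :=
      Finset.exists_lt_of_sum_lt (by simp [hsum])
    simp only [Finset.sum_apply, Pi.smul_apply, smul_eq_mul]
    exact Finset.sum_pos' (fun j _ => mul_nonneg (hα j) (hx j).2.le)
      ⟨i, Finset.mem_univ i, mul_pos hi (hx i).2⟩
  · rw [← sub_eq_zero, hdef, Finset.sum_eq_zero_iff_of_nonneg fun i _ => hrow i]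
    constructor
    · intro h i j hi hj
      have hij := (Finset.sum_eq_zero_iff_of_nonneg fun j _ => hterm i j).1
        (h i (Finset.mem_univ i)) j (Finset.mem_univ j)
      exact (onHyperboloid.eq_one_iff hK (hx i) (hx j)).1
        (sub_eq_zero.1 ((mul_eq_zero.1 hij).resolve_left (mul_pos hi hj).ne'))
    · intro h i _
      refine Finset.sum_eq_zero fun j _ => ?_
      rcases (hα i).eq_or_lt with hi | hi
      · simp [← hi]
      rcases (hα j).eq_or_lt with hj | hj
      · simp [← hj]
      rw [(onHyperboloid.eq_one_iff hK (hx i) (hx j)).2 (h i j hi hj), sub_self, mul_zero]
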